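/- For every Γ-invariant function ζ : X×Γ → H (i.e. ζ(γ₀x, γ₀γ) = U_{γ₀}(ζ(x,γ)) for all γ₀, γ, x), every x ∈ X and γ ∈ Γ, the family (π_x(μ·c)(U_μ(π_{μ⁻¹x}(c)(ζ(μ⁻¹x, μ⁻¹γ)))))_{μ∈Γ} is summable in H with sum ζ(x,γ). Equivalently, 𝒫 ∘ ((π(c))⋊Γ) is the identity on Γ-invariant functions, whence 𝒫 ∘ (π(c)⋊Γ) ∘ 𝒫 = 𝒫 on C_c(X×Γ, H), where (π(c)⋊Γ)(ζ)(x,γ) = π_x(c)(ζ(x,γ)). -/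

import Mathlib

/-- The averaging map `𝒫`: `𝒫ξ̂(x,γ) = ∑_μ π_x(μ·c)(U_μ(ξ̂(μ⁻¹x, μ⁻¹γ)))`. -/
noncomputable def avgP {Γ X Z H : Type*} [Group Γ] [MulAction Γ X]
    [NormedAddCommGroup H] [InnerProductSpace ℂ H]
    (π : X → (Z → ℂ) → (H →L[ℂ] H)) (U : Γ →* (H ≃ₗᵢ[ℂ] H))
    (ρ : Z → Γ → Z) (c : Z → ℝ) (ξ : X → Γ → H) (x : X) (γ : Γ) : H :=
  ∑' μ : Γ, π x (fun z => (c (ρ z μ) : ℂ)) (U μ (ξ (μ⁻¹ • x) (μ⁻¹ * γ)))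

/-!
Equivariance carries `U_μ` past `π_{μ⁻¹x}(c)` and turns `c` into its translate `μ·c`, while
invariance of `ζ` absorbs the remaining `U_μ`. The `μ`-th term of `𝒫((π(c)⋊Γ)ζ)(x,γ)` is therefore
`π_x(μ·c)² (ζ(x,γ)) = π_x((μ·c)²)(ζ(x,γ))`, and these sum to `ζ(x,γ)` by nondegeneracy. Since `𝒫`
only produces invariant functions, `𝒫 ∘ (π(c)⋊Γ) ∘ 𝒫 = 𝒫` follows.
-/

/-- A right action of `Γ` on `Z`, given as a plain function `ρ z γ = zγ`. -/
structure IsRightAction {Γ Z : Type*} [Group Γ] (ρ : Z → Γ → Z) : Prop where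
  one : ∀ z, ρ z 1 = z
  mul : ∀ (z : Z) (γ μ : Γ), ρ (ρ z γ) μ = ρ z (γ * μ)

/-- The left action `(γ·g)(z) = g(zγ)` on functions induced by a right action `ρ` on points. -/
def rightTranslate {Γ Z A : Type*} (ρ : Z → Γ → Z) (γ : Γ) (g : Z → A) : Z → A :=
  fun z => g (ρ z γ)

section RightTranslate

variable {Γ Z : Type*} [Group Γ] {ρ : Z → Γ → Z}

theorem rightTranslate_rightTranslate {A : Type*} (hρ : IsRightAction ρ) (γ μ : Γ) (g : Z → A) :
    rightTranslate ρ γ (rightTranslate ρ μ g) = rightTranslate ρ (γ * μ) g :=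
  funext fun z => congrArg g (hρ.mul z γ μ)

theorem rightTranslate_one {A : Type*} (hρ : IsRightAction ρ) (g : Z → A) :
    rightTranslate ρ 1 g = g :=
  funext fun z => congrArg g (hρ.one z)

variable [TopologicalSpace Z]

/-- The homeomorphism `z ↦ zγ` of a right action by continuous maps, with inverse `z ↦ zγ⁻¹`. -/
def IsRightAction.homeomorph (hρ : IsRightAction ρ) (hρ_cont : ∀ γ, Continuous fun z => ρ z γ)
    (γ : Γ) : Z ≃ₜ Z where
  toFun z := ρ z γ
  invFun z := ρ z γ⁻¹
  left_inv z := by simp only [hρ.mul, mul_inv_cancel, hρ.one]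
  right_inv z := by simp only [hρ.mul, inv_mul_cancel, hρ.one]
  continuous_toFun := hρ_cont γ
  continuous_invFun := hρ_cont γ⁻¹

theorem hasCompactSupport_rightTranslate {A : Type*} [Zero A] (hρ : IsRightAction ρ)
    (hρ_cont : ∀ γ, Continuous fun z => ρ z γ) {g : Z → A} (hg : HasCompactSupport g) (γ : Γ) :
    HasCompactSupport (rightTranslate ρ γ g) :=
  hg.comp_homeomorph (hρ.homeomorph hρ_cont γ)

end RightTranslate

/-- The map `T ⋊ Γ` on functions `X × Γ → V` applying the family `T` of operators fibrewise. -/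
def crossedProductMap {Γ X 𝕜 V : Type*} [Semiring 𝕜] [TopologicalSpace V] [AddCommMonoid V]
    [Module 𝕜 V] (T : X → (V →L[𝕜] V)) (ζ : X → Γ → V) : X → Γ → V :=
  fun x γ => T x (ζ x γ)

section Equivariant

variable {Γ X Z A 𝕜 V : Type*} [Group Γ] [MulAction Γ X] [Semiring 𝕜] [SeminormedAddCommGroup V]
  [Module 𝕜 V]

/-- The covariance relation `π_{γx}(g) = U_γ ∘ π_x(γ⁻¹·g) ∘ U_γ⁻¹` for a family of maps `π_x` from
functions on `Z` to operators. -/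
def IsEquivariantFamily (ρ : Z → Γ → Z) (U : Γ →* (V ≃ₗᵢ[𝕜] V))
    (π : X → (Z → A) → (V →L[𝕜] V)) : Prop :=
  ∀ (γ : Γ) (x : X) (g : Z → A) (v : V),
    π (γ • x) g v = U γ (π x (rightTranslate ρ γ⁻¹ g) (U γ⁻¹ v))

/-- Invariance of `ζ : X × Γ → V` (in curried form) under the diagonal action of `Γ` on `X × Γ`
and the representation `U` on `V`. -/
def IsInvariantFunction (U : Γ →* (V ≃ₗᵢ[𝕜] V)) (ζ : X → Γ → V) : Prop :=
  ∀ (γ₀ : Γ) (x : X) (γ : Γ), ζ (γ₀ • x) (γ₀ * γ) = U γ₀ (ζ x γ)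

variable {ρ : Z → Γ → Z} {U : Γ →* (V ≃ₗᵢ[𝕜] V)} {π : X → (Z → A) → (V →L[𝕜] V)}

theorem IsEquivariantFamily.map_apply (hπ : IsEquivariantFamily ρ U π) (hρ : IsRightAction ρ)
    (γ : Γ) (x : X) (g : Z → A) (v : V) :
    U γ (π x g v) = π (γ • x) (rightTranslate ρ γ g) (U γ v) := by
  have hU : U γ⁻¹ (U γ v) = v := by
    rw [map_inv, LinearIsometryEquiv.inv_def, LinearIsometryEquiv.symm_apply_apply]
  rw [hπ, rightTranslate_rightTranslate hρ, inv_mul_cancel, rightTranslate_one hρ, hU]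

theorem IsInvariantFunction.map_apply_inv {ζ : X → Γ → V} (hζ : IsInvariantFunction U ζ)
    (μ : Γ) (x : X) (γ : Γ) :
    U μ (ζ (μ⁻¹ • x) (μ⁻¹ * γ)) = ζ x γ := by
  rw [← hζ, smul_inv_smul, mul_inv_cancel_left]

theorem IsInvariantFunction.map_crossedProductMap_apply_inv {ζ : X → Γ → V}
    (hζ : IsInvariantFunction U ζ) (hρ : IsRightAction ρ) (hπ : IsEquivariantFamily ρ U π)
    (g : Z → A) (μ : Γ) (x : X) (γ : Γ) :
    U μ (crossedProductMap (π · g) ζ (μ⁻¹ • x) (μ⁻¹ * γ)) = π x (rightTranslate ρ μ g) (ζ x γ) := by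
  rw [crossedProductMap, hπ.map_apply hρ, smul_inv_smul, hζ.map_apply_inv]

theorem IsInvariantFunction.hasSum_rightTranslate_crossedProductMap {ζ : X → Γ → V}
    (hζ : IsInvariantFunction U ζ) (hρ : IsRightAction ρ) (hπ : IsEquivariantFamily ρ U π)
    {g : Z → A} {x : X} {γ : Γ}
    (hsum : HasSum (fun μ =>
      π x (rightTranslate ρ μ g) (π x (rightTranslate ρ μ g) (ζ x γ))) (ζ x γ)) :
    HasSum (fun μ => π x (rightTranslate ρ μ g)
      (U μ (crossedProductMap (π · g) ζ (μ⁻¹ • x) (μ⁻¹ * γ)))) (ζ x γ) := by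
  simpa only [hζ.map_crossedProductMap_apply_inv hρ hπ] using hsum

end Equivariant

/-- Where the sum defining `avgP` diverges at `(x, γ)`, it diverges along the whole `Γ`-orbit, and
both sides take the junk value `0`. -/
theorem isInvariantFunction_avgP {Γ X Z H : Type*} [Group Γ] [MulAction Γ X]
    [NormedAddCommGroup H] [InnerProductSpace ℂ H] {ρ : Z → Γ → Z} {U : Γ →* (H ≃ₗᵢ[ℂ] H)}
    {π : X → (Z → ℂ) → (H →L[ℂ] H)} (hρ : IsRightAction ρ) (hπ : IsEquivariantFamily ρ U π)
    (c : Z → ℝ) (ξ : X → Γ → H) : IsInvariantFunction U (avgP π U ρ c ξ) := by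
  intro γ₀ x γ
  let c' : Z → ℂ := fun z => c z
  have hterm (ν : Γ) :
      π (γ₀ • x) (rightTranslate ρ (γ₀ * ν) c')
          (U (γ₀ * ν) (ξ ((γ₀ * ν)⁻¹ • γ₀ • x) ((γ₀ * ν)⁻¹ * (γ₀ * γ)))) =
        U γ₀ (π x (rightTranslate ρ ν c') (U ν (ξ (ν⁻¹ • x) (ν⁻¹ * γ)))) := by
    rw [hπ.map_apply hρ, rightTranslate_rightTranslate hρ, map_mul, LinearIsometryEquiv.coe_mul,
      Function.comp_apply, mul_inv_rev, mul_smul, inv_smul_smul, mul_assoc, inv_mul_cancel_left]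
  calc avgP π U ρ c ξ (γ₀ • x) (γ₀ * γ)
      = ∑' ν, π (γ₀ • x) (rightTranslate ρ (γ₀ * ν) c')
          (U (γ₀ * ν) (ξ ((γ₀ * ν)⁻¹ • γ₀ • x) ((γ₀ * ν)⁻¹ * (γ₀ * γ)))) :=
        ((Equiv.mulLeft γ₀).tsum_eq _).symm
    _ = ∑' ν, U γ₀ (π x (rightTranslate ρ ν c') (U ν (ξ (ν⁻¹ • x) (ν⁻¹ * γ)))) := tsum_congr hterm
    _ = U γ₀ (avgP π U ρ c ξ x γ) := (U γ₀).toContinuousLinearEquiv.map_tsum.symm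

theorem avg_pi_c_identity_on_invariants_general {Γ Z X H : Type*} [Group Γ] [TopologicalSpace Z]
    [MulAction Γ X] [NormedAddCommGroup H] [InnerProductSpace ℂ H] {ρ : Z → Γ → Z}
    (hρ : IsRightAction ρ) (hρ_cont : ∀ γ, Continuous fun z => ρ z γ)
    {c : Z → ℝ} (hc_cont : Continuous c) (hc_supp : HasCompactSupport c)
    {U : Γ →* (H ≃ₗᵢ[ℂ] H)} {π : X → (Z → ℂ) → (H →L[ℂ] H)}
    (hπ_mul : ∀ (x : X) (f g : Z → ℂ), Continuous f → HasCompactSupport f →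
      Continuous g → HasCompactSupport g → π x (f * g) = (π x f).comp (π x g))
    (hπ_equiv : IsEquivariantFamily ρ U π)
    (hπ_sum : ∀ (x : X) (v : H),
      HasSum (fun γ => π x (rightTranslate ρ γ (fun z => (c z : ℂ)) ^ 2) v) v) :
    (∀ ζ : X → Γ → H, IsInvariantFunction U ζ → ∀ (x : X) (γ : Γ),
      HasSum (fun μ => π x (rightTranslate ρ μ fun z => (c z : ℂ))
        (U μ (crossedProductMap (π · fun z => (c z : ℂ)) ζ (μ⁻¹ • x) (μ⁻¹ * γ)))) (ζ x γ)) ∧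
    ∀ ξ : X → Γ → H,
      avgP π U ρ c (crossedProductMap (π · fun z => (c z : ℂ)) (avgP π U ρ c ξ)) =
        avgP π U ρ c ξ := by
  let c' : Z → ℂ := fun z => c z
  have hcont (μ : Γ) : Continuous (rightTranslate ρ μ c') :=
    (Complex.continuous_ofReal.comp hc_cont).comp (hρ_cont μ)
  have hsupp (μ : Γ) : HasCompactSupport (rightTranslate ρ μ c') :=
    hasCompactSupport_rightTranslate hρ hρ_cont (hc_supp.comp_left Complex.ofReal_zero) μ
  have hsq (x : X) (μ : Γ) : π x (rightTranslate ρ μ c' ^ 2) =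
      (π x (rightTranslate ρ μ c')).comp (π x (rightTranslate ρ μ c')) := by
    rw [sq, hπ_mul x _ _ (hcont μ) (hsupp μ) (hcont μ) (hsupp μ)]
  have hsum (x : X) (v : H) :
      HasSum (fun μ => π x (rightTranslate ρ μ c') (π x (rightTranslate ρ μ c') v)) v := by
    simpa only [c', hsq, ContinuousLinearMap.comp_apply] using hπ_sum x v
  have hinv (ζ : X → Γ → H) (hζ : IsInvariantFunction U ζ) (x : X) (γ : Γ) :=
    hζ.hasSum_rightTranslate_crossedProductMap hρ hπ_equiv (hsum x (ζ x γ))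
  exact ⟨hinv, fun ξ => funext₂ fun x γ =>
    (hinv _ (isInvariantFunction_avgP hρ hπ_equiv c ξ) x γ).tsum_eq⟩

/-- On `Γ`-invariant functions `ζ : X×Γ → H`, the family
`(π_x(μ·c)(U_μ(π_{μ⁻¹x}(c)(ζ(μ⁻¹x, μ⁻¹γ)))))_μ` is summable with sum `ζ(x,γ)`,
i.e. `𝒫 ∘ (π(c)⋊Γ)` is the identity on invariant functions; whence
`𝒫 ∘ (π(c)⋊Γ) ∘ 𝒫 = 𝒫` on `C_c(X×Γ, H)`. -/
theorem avg_pi_c_identity_on_invariants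
    {Γ : Type*} [Group Γ]
    {Z : Type*} [TopologicalSpace Z] [LocallyCompactSpace Z] [T2Space Z]
    {X : Type*} [TopologicalSpace X] [CompactSpace X] [T2Space X] [MulAction Γ X]
    {H : Type*} [NormedAddCommGroup H] [InnerProductSpace ℂ H] [CompleteSpace H]
    (ρ : Z → Γ → Z)
    (hρ_one : ∀ z, ρ z 1 = z)
    (hρ_mul : ∀ (z : Z) (γ μ : Γ), ρ (ρ z γ) μ = ρ z (γ * μ))
    (hρ_cont : ∀ γ : Γ, Continuous fun z => ρ z γ)
    (hρ_proper : ∀ K L : Set Z, IsCompact K → IsCompact L →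
      {γ : Γ | ∃ z ∈ K, ρ z γ ∈ L}.Finite)
    (hX_cont : ∀ γ : Γ, Continuous fun x : X => γ • x)
    (c : Z → ℝ) (hc_cont : Continuous c) (hc_supp : HasCompactSupport c)
    (hc_mem : ∀ z, c z ∈ Set.Icc (0 : ℝ) 1)
    (hc_sum : ∀ z, HasSum (fun γ : Γ => c (ρ z γ) ^ 2) 1)
    (U : Γ →* (H ≃ₗᵢ[ℂ] H))
    (π : X → (Z → ℂ) → (H →L[ℂ] H))
    (hπ_add : ∀ (x : X) (f g : Z → ℂ), Continuous f → HasCompactSupport f →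
      Continuous g → HasCompactSupport g → π x (f + g) = π x f + π x g)
    (hπ_mul : ∀ (x : X) (f g : Z → ℂ), Continuous f → HasCompactSupport f →
      Continuous g → HasCompactSupport g → π x (f * g) = (π x f).comp (π x g))
    (hπ_star : ∀ (x : X) (f : Z → ℂ), Continuous f → HasCompactSupport f →
      π x (fun z => (starRingEnd ℂ) (f z)) = ContinuousLinearMap.adjoint (π x f))
    (hπ_equiv : ∀ (γ : Γ) (x : X) (f : Z → ℂ) (v : H),
      π (γ • x) f v = U γ (π x (fun z => f (ρ z γ⁻¹)) (U γ⁻¹ v)))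
    (hπ_sum : ∀ (x : X) (v : H),
      HasSum (fun γ : Γ => π x (fun z => (c (ρ z γ) : ℂ) ^ 2) v) v) :
    (∀ ζ : X → Γ → H,
      (∀ (γ₀ : Γ) (x : X) (γ : Γ), ζ (γ₀ • x) (γ₀ * γ) = U γ₀ (ζ x γ)) →
      ∀ (x : X) (γ : Γ),
        HasSum (fun μ : Γ =>
            π x (fun z => (c (ρ z μ) : ℂ))
              (U μ (π (μ⁻¹ • x) (fun z => (c z : ℂ)) (ζ (μ⁻¹ • x) (μ⁻¹ * γ)))))
          (ζ x γ)) ∧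
    (∀ (ξ : X → Γ → H) (F : Finset Γ),
      (∀ (x : X) (γ : Γ), γ ∉ F → ξ x γ = 0) →
      (∀ γ : Γ, Continuous fun x => ξ x γ) →
      ∀ (x : X) (γ : Γ),
        avgP π U ρ c
          (fun x' γ' => π x' (fun z => (c z : ℂ)) (avgP π U ρ c ξ x' γ')) x γ =
        avgP π U ρ c ξ x γ) := by
  obtain ⟨hasSum_invariant, avgP_comp⟩ := avg_pi_c_identity_on_invariants_general
    ⟨hρ_one, hρ_mul⟩ hρ_cont hc_cont hc_supp hπ_mul hπ_equiv hπ_sum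
  exact ⟨hasSum_invariant, fun ξ _ _ _ x γ => congrFun₂ (avgP_comp ξ) x γ⟩
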